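/- arXiv:math-ph/0511037 — 5 statements merged into one kernel-verified Lean document; each statement's English description precedes it below -/
import Mathlib

section
/- Let d ≥ 1 be an integer and let λ be a real number with λ > −d/2. Then the function k ↦ (1 − (1/d) Σ_{i=1}^{d} cos(2π k_i))^λ (real power) is Lebesgue-integrable on the cube [0,1]^d ⊂ ℝ^d. -/
open MeasureTheory Real

/-- A negative power of `1 - cos (2πx)` is dominated on `(0,1)` by the powers of the distances
to the two endpoints. -/
lemma one_sub_cos_two_pi_rpow_le {m x : ℝ} (hm : m ≤ 0) (hx : x ∈ Set.Ioo (0 : ℝ) 1) :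
    (1 - cos (2 * π * x)) ^ m ≤ 8 ^ m * (x ^ (2 * m) + (1 - x) ^ (2 * m)) := by
  have key : ∀ y : ℝ, 0 < y → y ≤ 1 / 2 →
      (1 - cos (2 * π * y)) ^ m ≤ 8 ^ m * y ^ (2 * m) := by
    intro y hy hy'
    have hq : cos (2 * π * y) ≤ 1 - 2 / π ^ 2 * (2 * π * y) ^ 2 := by
      apply cos_le_one_sub_mul_cos_sq
      rw [abs_of_nonneg (by positivity)]
      nlinarith [pi_pos]
    have he : 2 / π ^ 2 * (2 * π * y) ^ 2 = 8 * y ^ 2 := by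
      field_simp
      ring
    rw [he] at hq
    calc (1 - cos (2 * π * y)) ^ m ≤ (8 * y ^ 2) ^ m :=
          rpow_le_rpow_of_nonpos (by positivity) (by linarith) hm
      _ = 8 ^ m * y ^ (2 * m) := by
          rw [mul_rpow (by norm_num) (by positivity), rpow_mul hy.le, rpow_two]
  obtain ⟨h0, h1⟩ := hx
  have p0 : 0 ≤ x ^ (2 * m) := rpow_nonneg h0.le _
  have p1 : 0 ≤ (1 - x) ^ (2 * m) := rpow_nonneg (by linarith) _
  rcases le_total x (1 / 2) with h | h
  · refine (key x h0 h).trans ?_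
    gcongr
    linarith
  · have hk := key (1 - x) (by linarith) (by linarith)
    rw [show 2 * π * (1 - x) = 2 * π - 2 * π * x by ring, cos_two_pi_sub] at hk
    refine hk.trans ?_
    gcongr
    linarith

lemma one_sub_cos_two_pi_pos {x : ℝ} (hx : x ∈ Set.Ioo (0 : ℝ) 1) :
    0 < 1 - cos (2 * π * x) := by
  have h : 0 < sin (π * x) :=
    sin_pos_of_pos_of_lt_pi (mul_pos pi_pos hx.1) (by nlinarith [pi_pos, hx.2])
  have h2 : cos (2 * π * x) = 1 - 2 * sin (π * x) ^ 2 := by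
    rw [mul_assoc, cos_two_mul, cos_sq']
    ring
  rw [h2]
  linarith [pow_pos h 2]

lemma integrableOn_one_sub_cos_two_pi_rpow {m : ℝ} (hm : m ≤ 0) (hm' : -1 / 2 < m) :
    IntegrableOn (fun x : ℝ => (1 - cos (2 * π * x)) ^ m) (Set.Ioo 0 1) := by
  have hI : IntervalIntegrable (fun x : ℝ => x ^ (2 * m)) volume 0 1 :=
    intervalIntegral.intervalIntegrable_rpow' (by linarith)
  have hJ : IntervalIntegrable (fun x : ℝ => (1 - x) ^ (2 * m)) volume 0 1 := by
    simpa using (hI.comp_sub_left 1).symm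
  have hS := (intervalIntegrable_iff_integrableOn_Ioo_of_le zero_le_one).1
    ((hI.add hJ).const_mul (8 ^ m))
  refine Integrable.mono' hS (Measurable.aestronglyMeasurable (by fun_prop)) ?_
  filter_upwards [ae_restrict_mem measurableSet_Ioo] with x hx
  rw [norm_of_nonneg (rpow_nonneg (one_sub_cos_two_pi_pos hx).le _)]
  exact one_sub_cos_two_pi_rpow_le hm hx

/-- The arithmetic-geometric mean inequality raised to a nonpositive power. -/
lemma arith_mean_rpow_le_prod_rpow {d : ℕ} (hd : 1 ≤ d) {l : ℝ} (hl : l ≤ 0) {a : Fin d → ℝ}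
    (ha : ∀ i, 0 < a i) :
    ((1 / (d : ℝ)) * ∑ i, a i) ^ l ≤ ∏ i, a i ^ (l / d) := by
  have hd' : (0 : ℝ) < d := by exact_mod_cast hd
  have h := geom_mean_le_arith_mean_weighted Finset.univ (fun _ : Fin d => 1 / (d : ℝ)) a
    (fun _ _ => by positivity) (by simp [hd'.ne']) (fun i _ => (ha i).le)
  rw [← Finset.mul_sum] at h
  refine (rpow_le_rpow_of_nonpos (Finset.prod_pos fun i _ => rpow_pos_of_pos (ha i) _) h hl).trans
    (le_of_eq ?_)
  rw [← finsetProd_rpow _ _ fun i _ => rpow_nonneg (ha i).le _]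
  refine Finset.prod_congr rfl fun i _ => ?_
  rw [← rpow_mul (ha i).le]
  congr 1
  ring

/-- For `d ≥ 1` and `λ > −d/2`, the dispersion-relation power
`k ↦ (1 − (1/d) Σᵢ cos(2π kᵢ))^λ` is Lebesgue-integrable on the cube `[0,1]^d`. -/
theorem critical_lattice_dispersion_integrable
    (d : ℕ) (hd : 1 ≤ d) (l : ℝ) (hl : l > -(d : ℝ)/2) :
    IntegrableOn
      (fun k : Fin d → ℝ =>
        (1 - (1/(d : ℝ)) * ∑ i : Fin d, Real.cos (2 * Real.pi * k i)) ^ l)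
      (Set.Icc (0 : Fin d → ℝ) 1) volume := by
  have hd' : (0 : ℝ) < d := by exact_mod_cast hd
  rcases le_total 0 l with h0 | h0
  · refine ContinuousOn.integrableOn_compact isCompact_Icc (Continuous.continuousOn ?_)
    exact Continuous.rpow_const (by fun_prop) fun _ => Or.inr h0
  have hae : Set.pi Set.univ (fun _ : Fin d => Set.Ioo (0 : ℝ) 1) =ᵐ[volume]
      Set.Icc (0 : Fin d → ℝ) 1 :=
    Measure.univ_pi_Ioo_ae_eq_Icc (f := (0 : Fin d → ℝ)) (g := 1)
  refine IntegrableOn.congr_set_ae ?_ hae.symm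
  have hP : IntegrableOn (fun k : Fin d → ℝ => ∏ i, (1 - cos (2 * π * k i)) ^ (l / d))
      (Set.pi Set.univ (fun _ : Fin d => Set.Ioo (0 : ℝ) 1)) := by
    rw [IntegrableOn, volume_pi, Measure.restrict_pi_pi]
    refine Integrable.fintype_prod (f := fun _ x => (1 - cos (2 * π * x)) ^ (l / d)) fun i => ?_
    refine integrableOn_one_sub_cos_two_pi_rpow (div_nonpos_of_nonpos_of_nonneg h0 hd'.le) ?_
    rw [lt_div_iff₀ hd']
    linarith
  refine Integrable.mono' hP (Measurable.aestronglyMeasurable (by fun_prop)) ?_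
  filter_upwards [ae_restrict_mem (MeasurableSet.univ_pi fun _ => measurableSet_Ioo)] with k hk
  have ha : ∀ i, 0 < 1 - cos (2 * π * k i) := fun i =>
    one_sub_cos_two_pi_pos (hk i (Set.mem_univ i))
  have he : 1 - (1 / (d : ℝ)) * ∑ i, cos (2 * π * k i) =
      (1 / (d : ℝ)) * ∑ i, (1 - cos (2 * π * k i)) := by
    simp only [Finset.sum_sub_distrib, Finset.sum_const, Finset.card_univ, Fintype.card_fin,
      nsmul_eq_mul]
    field_simp
  rw [he, norm_of_nonneg (rpow_nonneg
    (mul_nonneg (by positivity) (Finset.sum_nonneg fun i _ => (ha i).le)) _)]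
  exact arith_mean_rpow_le_prod_rpow hd h0 ha
end

section
/- Let n ≥ 1 and let Ω be a real symmetric positive-definite n×n matrix. On ℝⁿ × ℝⁿ with symplectic form s((q,p),(q',p')) = q·p' − q'·p, let A₀(q,p) = (p, −Ω² q) be the Hamiltonian vector field of H(q,p) = (1/2)(p·p + q·Ω² q), and let J(q,p) = (−Ω⁻¹ p, Ω q). Suppose J' : ℝⁿ × ℝⁿ → ℝⁿ × ℝⁿ is a linear map satisfying: J' ∘ J' = −identity; s(J' X, J' Y) = s(X, Y) for all X, Y; s(X, J' X) > 0 for all X ≠ 0; and J' ∘ A₀ = A₀ ∘ J' (so that the Hamiltonian flow is unitary for the complex Hilbert-space structure determined by J'). Then J' = J. -/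
open Matrix

/-- A linear map on `ℝⁿ × ℝⁿ` that acts as `ω` on both copies of the `ω`-eigenvectors of a
Hermitian matrix is two copies of that matrix. -/
theorem Matrix.IsHermitian.eq_mulVec_prod_of_forall_eigenvector {ι : Type*} [Fintype ι]
    [DecidableEq ι] {M : Matrix ι ι ℝ} (hM : M.IsHermitian)
    (B : ((ι → ℝ) × (ι → ℝ)) →ₗ[ℝ] ((ι → ℝ) × (ι → ℝ)))
    (hB : ∀ i (X : (ι → ℝ) × (ι → ℝ)), M *ᵥ X.1 = hM.eigenvalues i • X.1 →
      M *ᵥ X.2 = hM.eigenvalues i • X.2 → B X = hM.eigenvalues i • X)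
    (X : (ι → ℝ) × (ι → ℝ)) : B X = (M *ᵥ X.1, M *ᵥ X.2) := by
  suffices B = M.mulVecLin.prodMap M.mulVecLin by simp [this]
  let b := hM.eigenvectorBasis.toBasis.map (WithLp.linearEquiv 2 ℝ (ι → ℝ))
  have hb (i : ι) : M *ᵥ b i = hM.eigenvalues i • b i := by
    simpa [b] using hM.mulVec_eigenvectorBasis i
  refine LinearMap.prod_ext (b.ext fun i ↦ ?_) (b.ext fun i ↦ ?_)
  · simpa [hb] using hB i (b i, 0) (hb i) (by simp)
  · simpa [hb] using hB i (0, b i) (by simp) (hb i)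

/-- Uniqueness of the flow-invariant `s`-compatible positive complex structure:
if `J'` is a linear map on `ℝⁿ × ℝⁿ` with `J'² = −1`, `s(J'X,J'Y) = s(X,Y)`,
`s(X,J'X) > 0` for `X ≠ 0`, and `J'` commutes with the Hamiltonian vector field
`A₀(q,p) = (p, −Ω²q)`, then `J'(q,p) = (−Ω⁻¹p, Ωq)`. -/
theorem complex_structure_unique
    (n : ℕ) (hn : 1 ≤ n) (Ω : Matrix (Fin n) (Fin n) ℝ)
    (hsymm : Ω.IsSymm) (hpos : Ω.PosDef)
    (s : ((Fin n → ℝ) × (Fin n → ℝ)) → ((Fin n → ℝ) × (Fin n → ℝ)) → ℝ)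
    (hs : ∀ X Y, s X Y = X.1 ⬝ᵥ Y.2 - Y.1 ⬝ᵥ X.2)
    (A₀ : ((Fin n → ℝ) × (Fin n → ℝ)) →ₗ[ℝ] ((Fin n → ℝ) × (Fin n → ℝ)))
    (hA₀ : ∀ X, A₀ X = (X.2, -((Ω * Ω) *ᵥ X.1)))
    (J' : ((Fin n → ℝ) × (Fin n → ℝ)) →ₗ[ℝ] ((Fin n → ℝ) × (Fin n → ℝ)))
    (hJ'sq : ∀ X, J' (J' X) = -X)
    (hJ'compat : ∀ X Y, s (J' X) (J' Y) = s X Y)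
    (hJ'pos : ∀ X, X ≠ 0 → 0 < s X (J' X))
    (hJ'comm : ∀ X, J' (A₀ X) = A₀ (J' X)) :
    ∀ X, J' X = (-(Ω⁻¹ *ᵥ X.2), Ω *ᵥ X.1) := by
  have hA_nonpos (X) : s X (A₀ X) ≤ 0 := by
    have h : X.1 ⬝ᵥ ((Ω * Ω) *ᵥ X.1) = (Ω *ᵥ X.1) ⬝ᵥ (Ω *ᵥ X.1) := by
      rw [← mulVec_mulVec, dotProduct_mulVec, ← mulVec_transpose, hsymm.eq]
    have h₁ : 0 ≤ (Ω *ᵥ X.1) ⬝ᵥ (Ω *ᵥ X.1) := by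
      simpa using dotProduct_star_self_nonneg (Ω *ᵥ X.1)
    have h₂ : 0 ≤ X.2 ⬝ᵥ X.2 := by simpa using dotProduct_star_self_nonneg X.2
    rw [hs, hA₀, dotProduct_neg, h]
    linarith
  have hJA : ∀ X, J' (A₀ X) = (Ω *ᵥ X.1, Ω *ᵥ X.2) := by
    refine hpos.isHermitian.eq_mulVec_prod_of_forall_eigenvector (J' ∘ₗ A₀) fun i X h₁ h₂ ↦ ?_
    have hω := hpos.eigenvalues_pos i
    generalize hpos.isHermitian.eigenvalues i = ω at h₁ h₂ hω ⊢
    have hAA : A₀ (A₀ X) = -(ω ^ 2) • X := by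
      ext j <;> simp [hA₀, ← mulVec_mulVec, h₁, h₂, mulVec_smul] <;> ring
    -- The defect `W = J' A₀ X - ω X` satisfies `A₀ W = ω J' W`, so positivity forces `W = 0`.
    have hAW : A₀ (J' (A₀ X) - ω • X) = ω • J' (J' (A₀ X) - ω • X) := by
      rw [map_sub, ← hJ'comm, hAA, map_sub, hJ'sq]
      simp only [map_smul]
      module
    by_contra hne
    have hW : J' (A₀ X) - ω • X ≠ 0 := fun h ↦ hne (sub_eq_zero.mp h)
    have hnonpos := hA_nonpos (J' (A₀ X) - ω • X)
    have hs_smul (Y Z) : s Y (ω • Z) = ω * s Y Z := by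
      simp [hs, mul_sub]
    rw [hAW, hs_smul] at hnonpos
    exact (mul_pos hω (hJ'pos _ hW)).not_ge hnonpos
  intro X
  have hdet : IsUnit Ω.det := hpos.det_pos.ne'.isUnit
  have hX : A₀ (-(Ω⁻¹ *ᵥ (Ω⁻¹ *ᵥ X.2)), X.1) = X := by
    simp [hA₀, mulVec_neg, mul_assoc, mul_nonsing_inv_cancel_left _ _ hdet,
      mul_nonsing_inv _ hdet]
  conv_lhs => rw [← hX]
  simp [hJA, mulVec_neg, mul_nonsing_inv_cancel_left _ _ hdet]
end

section
/- Let n ≥ 1, let Ω be a real symmetric positive-definite n×n matrix, and let ψ₀(x) = exp(−(x·Ωx)/2) on ℝⁿ. Then for all a, b ∈ ℝⁿ, ∫_{ℝⁿ} ψ₀(x) · exp(i(b·x − (a·b)/2)) · ψ₀(x − a) dx = (∫_{ℝⁿ} ψ₀(x)² dx) · exp(−(1/4)(a·Ωa + b·Ω⁻¹b)); that is, the vacuum expectation value of the Weyl operator W(a,b) equals exp(−(1/2)‖z_Ω(a,b)‖²). -/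
open Matrix MeasureTheory

open scoped MatrixOrder in
/-- A real positive definite matrix factors as `Bᵀ * B` with `B` invertible. -/
lemma Matrix.PosDef.exists_eq_transpose_mul_self {ι : Type*} [Fintype ι] [DecidableEq ι]
    {A : Matrix ι ι ℝ} (hA : A.PosDef) : ∃ B : Matrix ι ι ℝ, B.det ≠ 0 ∧ A = Bᵀ * B := by
  obtain ⟨B, hB⟩ := CStarAlgebra.nonneg_iff_eq_star_mul_self.mp hA.posSemidef.nonneg
  have hAB : A = Bᵀ * B := by
    rw [hB, star_eq_conjTranspose, conjTranspose_eq_transpose_of_trivial]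
  refine ⟨B, fun h ↦ ?_, hAB⟩
  have hdet := hA.det_pos
  simp [hAB, h] at hdet

/-- Linear change of variables on `ι → ℝ` for a continuous integrand. -/
lemma integral_comp_mulVec {ι : Type*} [Fintype ι] [DecidableEq ι] {B : Matrix ι ι ℝ}
    (hB : B.det ≠ 0) {f : (ι → ℝ) → ℂ} (hf : Continuous f) :
    ∫ x, f (B *ᵥ x) = |B.det⁻¹| • ∫ y, f y := by
  have hmeas : Measurable (toLin' B) := (toLin' B).continuous_of_finiteDimensional.measurable
  have h := integral_map (μ := volume) hmeas.aemeasurable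
    (hf.aestronglyMeasurable (μ := Measure.map (toLin' B) volume))
  rw [Real.map_matrix_volume_pi_eq_smul_volume_pi hB, integral_smul_measure,
    ENNReal.toReal_ofReal (abs_nonneg _)] at h
  simpa [toLin'_apply] using h.symm

/-- The Fourier integral of `exp (-|B x|²)`. -/
lemma integral_cexp_neg_transpose_mul_self_add {ι : Type*} [Fintype ι] [DecidableEq ι]
    {B : Matrix ι ι ℝ} (hB : B.det ≠ 0) (b : ι → ℝ) :
    ∫ x : ι → ℝ, Complex.exp (-((x ⬝ᵥ ((Bᵀ * B) *ᵥ x) : ℝ) : ℂ) +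
        Complex.I * ((b ⬝ᵥ x : ℝ) : ℂ))
      = (|B.det⁻¹| • (Real.pi : ℂ) ^ (Fintype.card ι / 2 : ℂ)) *
          Complex.exp (-(1 / 4 : ℂ) * ((b ⬝ᵥ ((Bᵀ * B)⁻¹ *ᵥ b) : ℝ) : ℂ)) := by
  have hunit : IsUnit B.det := isUnit_iff_ne_zero.mpr hB
  set c : ι → ℝ := B⁻¹ᵀ *ᵥ b with hc
  have hquad (x : ι → ℝ) : x ⬝ᵥ ((Bᵀ * B) *ᵥ x) = ∑ i, (B *ᵥ x) i ^ 2 := by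
    rw [← mulVec_mulVec, dotProduct_mulVec, vecMul_transpose]
    simp [dotProduct, sq]
  have hlin (x : ι → ℝ) : b ⬝ᵥ x = ∑ i, c i * (B *ᵥ x) i := by
    change _ = c ⬝ᵥ (B *ᵥ x)
    rw [hc, mulVec_transpose, ← dotProduct_mulVec, mulVec_mulVec, nonsing_inv_mul _ hunit,
      one_mulVec]
  have hinv : b ⬝ᵥ ((Bᵀ * B)⁻¹ *ᵥ b) = ∑ i, c i ^ 2 := by
    rw [Matrix.mul_inv_rev, ← mulVec_mulVec, dotProduct_mulVec, ← transpose_nonsing_inv, ← hc,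
      ← mulVec_transpose, ← hc]
    simp [dotProduct, sq]
  have hcont : Continuous fun y : ι → ℝ ↦
      Complex.exp (-(1 : ℂ) * ∑ i, (y i : ℂ) ^ 2 + ∑ i, (Complex.I * c i) * y i) := by
    fun_prop
  have hmain := integral_comp_mulVec hB hcont
  rw [GaussianFourier.integral_cexp_neg_mul_sum_add (by simp)] at hmain
  calc
    _ = ∫ x : ι → ℝ, Complex.exp (-(1 : ℂ) * ∑ i, (((B *ᵥ x) i : ℝ) : ℂ) ^ 2 +
          ∑ i, (Complex.I * c i) * ((B *ᵥ x) i : ℝ)) := by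
      congr 1 with x
      rw [hquad, hlin]
      simp [Finset.mul_sum, mul_assoc]
    _ = _ := by
      rw [hmain, hinv, div_one, smul_mul_assoc]
      congr 3
      simp only [mul_pow, Complex.I_sq, ← Finset.mul_sum]
      push_cast
      ring

/-- The Fourier integral of a centred Gaussian with positive definite quadratic form. -/
lemma Matrix.PosDef.integral_cexp_neg_add {ι : Type*} [Fintype ι] [DecidableEq ι]
    {A : Matrix ι ι ℝ} (hA : A.PosDef) (b : ι → ℝ) :
    ∫ x : ι → ℝ, Complex.exp (-((x ⬝ᵥ (A *ᵥ x) : ℝ) : ℂ) + Complex.I * ((b ⬝ᵥ x : ℝ) : ℂ))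
      = ((∫ x : ι → ℝ, Real.exp (-(x ⬝ᵥ (A *ᵥ x))) : ℝ) : ℂ) *
          Complex.exp (-(1 / 4 : ℂ) * ((b ⬝ᵥ (A⁻¹ *ᵥ b) : ℝ) : ℂ)) := by
  obtain ⟨B, hB, rfl⟩ := hA.exists_eq_transpose_mul_self
  have hzero := integral_cexp_neg_transpose_mul_self_add hB 0
  rw [integral_cexp_neg_transpose_mul_self_add hB b, ← integral_complex_ofReal]
  congr 1
  simpa using hzero.symm

/-- The parallelogram identity for a quadratic form, centred at the midpoint `a / 2`. -/
lemma quadratic_midpoint {ι : Type*} [Fintype ι] (A : Matrix ι ι ℝ)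
    (a y : ι → ℝ) :
    (y + (1 / 2 : ℝ) • a) ⬝ᵥ (A *ᵥ (y + (1 / 2 : ℝ) • a)) +
        (y + (1 / 2 : ℝ) • a - a) ⬝ᵥ (A *ᵥ (y + (1 / 2 : ℝ) • a - a)) =
      2 * (y ⬝ᵥ (A *ᵥ y)) + a ⬝ᵥ (A *ᵥ a) / 2 := by
  have hsub : y + (1 / 2 : ℝ) • a - a = y - (1 / 2 : ℝ) • a := by
    ext i
    simp
    ring
  rw [hsub]
  simp only [mulVec_add, mulVec_sub, mulVec_smul, dotProduct_add, dotProduct_sub, add_dotProduct,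
    sub_dotProduct, smul_dotProduct, dotProduct_smul, smul_eq_mul]
  ring

/-- The vacuum expectation value of the Weyl operator `W(a,b)`, acting by
`(Wψ)(x) = e^{i(b·x − a·b/2)} ψ(x−a)`, in the Gaussian state
`ψ₀(x) = exp(−x·Ωx/2)` equals `(∫ψ₀²) · exp(−¼(a·Ωa + b·Ω⁻¹b))`. -/
theorem gaussian_weyl_expectation
    (n : ℕ) (hn : 1 ≤ n) (Ω : Matrix (Fin n) (Fin n) ℝ)
    (hΩsymm : Ω.IsSymm) (hΩpos : Ω.PosDef)
    (ψ₀ : (Fin n → ℝ) → ℝ)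
    (hψ₀ : ∀ x, ψ₀ x = Real.exp (-(x ⬝ᵥ (Ω *ᵥ x)) / 2))
    (a b : Fin n → ℝ) :
    ∫ x : Fin n → ℝ,
        (ψ₀ x : ℂ) * Complex.exp (Complex.I * ((b ⬝ᵥ x - (a ⬝ᵥ b) / 2 : ℝ) : ℂ))
          * (ψ₀ (x - a) : ℂ)
      = ((∫ x : Fin n → ℝ, (ψ₀ x)^2 : ℝ) : ℂ) *
          Complex.exp (-(1/4 : ℂ) *
            ((a ⬝ᵥ (Ω *ᵥ a) + b ⬝ᵥ (Ω⁻¹ *ᵥ b) : ℝ) : ℂ)) := by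
  have hshift := integral_add_right_eq_self (μ := volume) (fun x : Fin n → ℝ ↦
    (ψ₀ x : ℂ) * Complex.exp (Complex.I * ((b ⬝ᵥ x - (a ⬝ᵥ b) / 2 : ℝ) : ℂ))
      * (ψ₀ (x - a) : ℂ)) ((1 / 2 : ℝ) • a)
  have hsq (x : Fin n → ℝ) : ψ₀ x ^ 2 = Real.exp (-(x ⬝ᵥ (Ω *ᵥ x))) := by
    rw [hψ₀, ← Real.exp_nat_mul]
    congr 1
    push_cast
    ring
  have hintegrand (y : Fin n → ℝ) :
      (ψ₀ (y + (1 / 2 : ℝ) • a) : ℂ) *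
          Complex.exp (Complex.I * ((b ⬝ᵥ (y + (1 / 2 : ℝ) • a) - (a ⬝ᵥ b) / 2 : ℝ) : ℂ)) *
          (ψ₀ (y + (1 / 2 : ℝ) • a - a) : ℂ) =
        Complex.exp (-((y ⬝ᵥ (Ω *ᵥ y) : ℝ) : ℂ) + Complex.I * ((b ⬝ᵥ y : ℝ) : ℂ)) *
          Complex.exp (-(1 / 4 : ℂ) * ((a ⬝ᵥ (Ω *ᵥ a) : ℝ) : ℂ)) := by
    have hphase : b ⬝ᵥ (y + (1 / 2 : ℝ) • a) - (a ⬝ᵥ b) / 2 = b ⬝ᵥ y := by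
      rw [dotProduct_add, dotProduct_smul, dotProduct_comm b a, smul_eq_mul]
      ring
    have hmid := congrArg (fun r : ℝ ↦ (r : ℂ)) (quadratic_midpoint Ω a y)
    rw [hphase, hψ₀, hψ₀, Complex.ofReal_exp, Complex.ofReal_exp, ← Complex.exp_add,
      ← Complex.exp_add, ← Complex.exp_add]
    congr 1
    push_cast at hmid ⊢
    linear_combination (-1 / 2 : ℂ) * hmid
  rw [← hshift]
  simp_rw [hintegrand, hsq]
  rw [integral_mul_const, hΩpos.integral_cexp_neg_add b, mul_assoc, ← Complex.exp_add]
  congr 2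
  push_cast
  ring
end

section
/- Let Ω be a real symmetric positive-definite 2×2 matrix whose off-diagonal entry satisfies Ω₁₂ ≠ 0, and let ψ₀(x) = exp(−(x·Ωx)/2) on ℝ². Let P be a polynomial in two variables with complex coefficients and set ψ(x₁,x₂) = P(x₁,x₂)·ψ₀(x₁,x₂). Suppose that ψ is indistinguishable from ψ₀ by all Weyl operators localized on the second oscillator, i.e. for all a, b ∈ ℝ: ∫_{ℝ²} conj(ψ(x₁,x₂)) e^{i(b x₂ − a b/2)} ψ(x₁, x₂ − a) dx = ∫_{ℝ²} ψ₀(x₁,x₂) e^{i(b x₂ − a b/2)} ψ₀(x₁, x₂ − a) dx. Then P is a constant polynomial, i.e. ψ is a scalar multiple of the ground state ψ₀. (Equivalently: if the coupling Ω₁₂ is nonzero, no state with a finite nonzero number of quanta is a strictly local excitation of the vacuum supported on site 1.) -/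
open Matrix MeasureTheory

open Polynomial FourierTransform

/-- The substitution `p(U + m T, s T + r)`, as a polynomial in `T` with coefficients in `ℂ[U]`. -/
noncomputable def shearSubst (m s r : ℂ) (p : MvPolynomial (Fin 2) ℂ) : ℂ[X][X] :=
  MvPolynomial.aeval ![C X + C (C m) * X, C (C s) * X + C (C r)] p

lemma evalEval_shearSubst (m s r u t : ℂ) (p : MvPolynomial (Fin 2) ℂ) :
    (shearSubst m s r p).evalEval u t = MvPolynomial.eval ![u + m * t, s * t + r] p := by
  unfold shearSubst
  induction p using MvPolynomial.induction_on with
  | C a =>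
    simp [evalEval, Polynomial.algebraMap_apply]
  | add p q hp hq => simp [hp, hq]
  | mul_X p i hp =>
    rw [map_mul, evalEval_mul, hp]
    fin_cases i <;> simp [evalEval]

/-- Each monomial of degree `k` contributes to the coefficient of `T ^ k` only by its value
at `(m, s)`. -/
lemma coeff_shearSubst {d : ℕ} (m s r : ℂ) (p : MvPolynomial (Fin 2) ℂ) (hp : p.totalDegree ≤ d) :
    (shearSubst m s r p).natDegree ≤ d ∧
      (shearSubst m s r p).coeff d =
        C (MvPolynomial.eval ![m, s] (MvPolynomial.homogeneousComponent d p)) := by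
  have h0 : (C X + C (C m) * X : ℂ[X][X]).natDegree ≤ 1 := by compute_degree
  have h1 : (C (C s) * X + C (C r) : ℂ[X][X]).natDegree ≤ 1 := by compute_degree
  have key (e : Fin 2 →₀ ℕ) :
      ((C X + C (C m) * X) ^ e 0 * (C (C s) * X + C (C r)) ^ e 1 : ℂ[X][X]).natDegree
          ≤ e 0 + e 1 ∧
      ((C X + C (C m) * X) ^ e 0 * (C (C s) * X + C (C r)) ^ e 1 : ℂ[X][X]).coeff (e 0 + e 1)
          = C (m ^ e 0 * s ^ e 1) := by
    have n0 := natDegree_pow_le_of_le (e 0) h0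
    have n1 := natDegree_pow_le_of_le (e 1) h1
    have c0 := coeff_pow_of_natDegree_le (m := e 0) h0
    have c1 := coeff_pow_of_natDegree_le (m := e 1) h1
    simp only [mul_one] at n0 n1 c0 c1
    refine ⟨natDegree_mul_le_of_le n0 n1, ?_⟩
    rw [coeff_mul_add_eq_of_natDegree_le n0 n1, c0, c1]
    simp
  have hdeg {e : Fin 2 →₀ ℕ} : e.degree = e 0 + e 1 := by
    simp [Finsupp.degree_eq_sum]
  have expand : shearSubst m s r p = ∑ e ∈ p.support, C (C (p.coeff e)) *
      ((C X + C (C m) * X) ^ e 0 * (C (C s) * X + C (C r)) ^ e 1) := by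
    rw [shearSubst, MvPolynomial.aeval_def, MvPolynomial.eval₂_eq']
    simp [Polynomial.algebraMap_apply]
  have hle {e : Fin 2 →₀ ℕ} (he : e ∈ p.support) : e 0 + e 1 ≤ d := by
    have := MvPolynomial.le_totalDegree he
    rw [← hdeg]
    exact this.trans hp
  rw [expand]
  constructor
  · refine natDegree_sum_le_of_forall_le _ _ fun e he => ?_
    exact (natDegree_C_mul_le _ _).trans ((key e).1.trans (hle he))
  · rw [finsetSum_coeff, MvPolynomial.homogeneousComponent_apply, map_sum, map_sum,
      Finset.sum_filter]
    refine Finset.sum_congr rfl fun e he => ?_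
    rw [coeff_C_mul]
    split_ifs with h
    · rw [← h, hdeg, (key e).2, MvPolynomial.eval_monomial]
      simp [Finsupp.prod_fintype]
    · rw [coeff_eq_zero_of_natDegree_lt, mul_zero]
      refine (key e).1.trans_lt (lt_of_le_of_ne (hle he) ?_)
      rwa [← hdeg]

lemma MvPolynomial.homogeneousComponent_totalDegree_ne_zero {σ R : Type*} [CommSemiring R]
    {p : MvPolynomial σ R} (hp : p ≠ 0) :
    MvPolynomial.homogeneousComponent p.totalDegree p ≠ 0 := by
  intro h
  obtain ⟨e, he, hmax⟩ := p.support.exists_mem_eq_sup (MvPolynomial.support_nonempty.2 hp)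
    (fun e => e.sum fun _ n => n)
  have hc := congrArg (MvPolynomial.coeff e) h
  rw [MvPolynomial.coeff_homogeneousComponent, if_pos, MvPolynomial.coeff_zero] at hc
  · exact MvPolynomial.mem_support_iff.1 he hc
  · exact hmax.symm

lemma MvPolynomial.eq_zero_of_eval_real {σ : Type*} {p : MvPolynomial σ ℂ}
    (h : ∀ x : σ → ℝ, MvPolynomial.eval (fun i => (x i : ℂ)) p = 0) : p = 0 := by
  refine MvPolynomial.funext_set (fun _ => Set.range ((↑) : ℝ → ℂ))
    (fun _ => Set.infinite_range_of_injective Complex.ofReal_injective) fun x hx => ?_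
  choose y hy using fun i => hx i (Set.mem_univ i)
  simpa [hy] using h y

lemma Polynomial.eq_zero_of_eval_real {p : ℂ[X]} (h : ∀ x : ℝ, p.eval (x : ℂ) = 0) : p = 0 := by
  refine p.eq_zero_of_infinite_isRoot
    ((Set.infinite_range_of_injective Complex.ofReal_injective).mono ?_)
  rintro _ ⟨x, rfl⟩
  exact h x

lemma integrable_eval_mul_gaussian {A : ℝ} (hA : 0 < A) (q : ℂ[X]) :
    Integrable fun u : ℝ => q.eval (u : ℂ) * (Real.exp (-A * u ^ 2) : ℂ) := by
  have hmon (n : ℕ) : Integrable fun u : ℝ => u ^ n * Real.exp (-A * u ^ 2) := by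
    have := integrable_rpow_mul_exp_neg_mul_sq hA (s := n) (by linarith [n.cast_nonneg (α := ℝ)])
    simpa using this
  simp_rw [eval_eq_sum_range, Finset.sum_mul]
  refine integrable_finsetSum _ fun n _ => ?_
  have := ((hmon n).ofReal (𝕜 := ℂ)).const_mul (q.coeff n)
  refine this.congr (ae_of_all _ fun u => ?_)
  simp [mul_assoc]

/-- The integral over `u` of `R(u, T)` against the weight `exp (-A u²)`, a polynomial in `T`. -/
noncomputable def gaussianAverage (A : ℝ) (R : ℂ[X][X]) : ℂ[X] :=
  ∑ n ∈ Finset.range (R.natDegree + 1),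
    monomial n (∫ u : ℝ, (R.coeff n).eval (u : ℂ) * (Real.exp (-A * u ^ 2) : ℂ))

lemma coeff_gaussianAverage (A : ℝ) (R : ℂ[X][X]) (n : ℕ) :
    (gaussianAverage A R).coeff n =
      ∫ u : ℝ, (R.coeff n).eval (u : ℂ) * (Real.exp (-A * u ^ 2) : ℂ) := by
  simp only [gaussianAverage, finsetSum_coeff, coeff_monomial, Finset.sum_ite_eq',
    Finset.mem_range]
  split_ifs with h
  · rfl
  · rw [coeff_eq_zero_of_natDegree_lt (by lia)]
    simp

lemma evalEval_eq_sum (R : ℂ[X][X]) (u t : ℂ) :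
    R.evalEval u t = ∑ n ∈ Finset.range (R.natDegree + 1), (R.coeff n).eval u * t ^ n := by
  rw [evalEval, eval_eq_sum_range (p := R), eval_finsetSum]
  simp

lemma eval_gaussianAverage {A : ℝ} (hA : 0 < A) (R : ℂ[X][X]) (t : ℂ) :
    (gaussianAverage A R).eval t =
      ∫ u : ℝ, R.evalEval (u : ℂ) t * (Real.exp (-A * u ^ 2) : ℂ) := by
  simp_rw [evalEval_eq_sum, Finset.sum_mul, mul_right_comm _ (t ^ _)]
  rw [integral_finsetSum _ fun n _ => (integrable_eval_mul_gaussian hA _).mul_const _]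
  simp [gaussianAverage, eval_finsetSum, integral_mul_const]

lemma integrable_evalEval_mul_gaussian {A δ : ℝ} (hA : 0 < A) (hδ : 0 < δ) (R : ℂ[X][X]) :
    Integrable fun z : ℝ × ℝ => R.evalEval (z.2 : ℂ) (z.1 : ℂ) *
      (Real.exp (-A * z.2 ^ 2) : ℂ) * (Real.exp (-δ * z.1 ^ 2) : ℂ) := by
  simp_rw [evalEval_eq_sum, Finset.sum_mul]
  refine integrable_finsetSum _ fun n _ => ?_
  have := (integrable_eval_mul_gaussian hδ (X ^ n)).mul_prod
    (integrable_eval_mul_gaussian hA (R.coeff n))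
  refine this.congr (ae_of_all _ fun z => ?_)
  simp only [eval_pow, eval_X]
  ring

/-- A polynomial whose product with a Gaussian has vanishing Fourier transform is zero. -/
lemma eq_zero_of_fourier_mul_gaussian_eq_zero {δ : ℝ} (hδ : 0 < δ) (G : ℂ[X])
    (h : ∀ b : ℝ, ∫ w : ℝ, Complex.exp (Complex.I * ((b * w : ℝ) : ℂ)) *
      (G.eval (w : ℂ) * (Real.exp (-δ * w ^ 2) : ℂ)) = 0) : G = 0 := by
  set f : ℝ → ℂ := fun w => G.eval (w : ℂ) * (Real.exp (-δ * w ^ 2) : ℂ) with hf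
  have hcont : Continuous f := by fun_prop
  have hF : 𝓕 f = 0 := by
    ext v
    rw [Real.fourier_real_eq_integral_exp_smul, Pi.zero_apply, ← h (-2 * Real.pi * v)]
    refine integral_congr_ae (ae_of_all _ fun w => ?_)
    simp only [smul_eq_mul, hf]
    congr 2
    push_cast
    ring
  have hinv := hcont.fourierInv_fourier_eq (integrable_eval_mul_gaussian hδ G)
    (by rw [hF]; exact integrable_zero _ _ _)
  have hf0 : f = 0 := by
    rw [← hinv, hF]
    ext v
    simp [Real.fourierInv_eq]
  refine Polynomial.eq_zero_of_eval_real fun x => ?_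
  have := congrFun hf0 x
  simpa [hf] using this

/-- Letting both arguments of the averaged product tend to infinity along a line isolates the
components of top degree. -/
lemma eval_homogeneousComponent_mul_eq_zero {A k : ℝ} (hA : 0 < A) {d : ℕ} (hd : 0 < d)
    {p q : MvPolynomial (Fin 2) ℂ} (hp : p.totalDegree ≤ d) (hq : q.totalDegree ≤ d)
    (h : ∀ a : ℝ, gaussianAverage A
      (shearSubst (-2 * k) 1 (a / 2) q * shearSubst (-2 * k) 1 (-a / 2) p - 1) = 0) (α β : ℝ) :
    MvPolynomial.eval ![(-2 * k * α : ℂ), α + β / 2] (MvPolynomial.homogeneousComponent d q) *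
      MvPolynomial.eval ![(-2 * k * α : ℂ), α - β / 2] (MvPolynomial.homogeneousComponent d p) = 0 := by
  set Q := shearSubst (-2 * k * α) (α + β / 2) 0 q
  set P := shearSubst (-2 * k * α) (α - β / 2) 0 p
  obtain ⟨nQ, cQ⟩ := coeff_shearSubst (-2 * k * α) (α + β / 2) 0 q hq
  obtain ⟨nP, cP⟩ := coeff_shearSubst (-2 * k * α) (α - β / 2) 0 p hp
  have havg : gaussianAverage A (Q * P - 1) = 0 := by
    refine Polynomial.eq_zero_of_eval_real fun t => ?_
    have ht := congrArg (eval ((t * α : ℝ) : ℂ)) (h (t * β))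
    rw [eval_gaussianAverage hA, eval_zero] at ht
    rw [eval_gaussianAverage hA, ← ht]
    refine integral_congr_ae (ae_of_all _ fun u => ?_)
    simp only [Q, P, evalEval_sub, evalEval_mul, evalEval_shearSubst, evalEval_one]
    push_cast
    congr 6
    all_goals ring_nf
  have hc := coeff_gaussianAverage A (Q * P - 1) (d + d)
  rw [havg, coeff_zero, coeff_sub, coeff_mul_add_eq_of_natDegree_le nQ nP, cQ, cP, coeff_one,
    if_neg (by lia), sub_zero, ← C_mul] at hc
  simp only [eval_C] at hc
  rw [integral_const_mul, integral_complex_ofReal, integral_gaussian] at hc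
  refine (mul_eq_zero.1 hc.symm).resolve_right ?_
  exact_mod_cast (Real.sqrt_pos.2 (div_pos Real.pi_pos hA)).ne'

lemma homogeneousComponent_eq_zero_or_eq_zero {A k : ℝ} (hA : 0 < A) (hk : k ≠ 0)
    {d : ℕ} (hd : 0 < d)
    {p q : MvPolynomial (Fin 2) ℂ} (hp : p.totalDegree ≤ d) (hq : q.totalDegree ≤ d)
    (h : ∀ a : ℝ, gaussianAverage A
      (shearSubst (-2 * k) 1 (a / 2) q * shearSubst (-2 * k) 1 (-a / 2) p - 1) = 0) :
    MvPolynomial.homogeneousComponent d q = 0 ∨ MvPolynomial.homogeneousComponent d p = 0 := by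
  let L (ε : ℂ) : Fin 2 → MvPolynomial (Fin 2) ℂ :=
    ![MvPolynomial.C (-2 * k : ℂ) * MvPolynomial.X 0,
      MvPolynomial.X 0 + MvPolynomial.C (ε / 2) * MvPolynomial.X 1]
  have eval_L (ε : ℂ) (f : MvPolynomial (Fin 2) ℂ) (x : Fin 2 → ℂ) :
      MvPolynomial.eval x (MvPolynomial.bind₁ (L ε) f) =
        MvPolynomial.eval ![(-2 * k * x 0 : ℂ), x 0 + ε / 2 * x 1] f := by
    rw [MvPolynomial.eval, MvPolynomial.eval₂Hom_bind₁, MvPolynomial.eval]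
    congr 2
    ext i
    fin_cases i <;> simp [L]
  have inj (ε : ℝ) (hε : ε ≠ 0) (f : MvPolynomial (Fin 2) ℂ)
      (hf : MvPolynomial.bind₁ (L ε) f = 0) : f = 0 := by
    refine MvPolynomial.eq_zero_of_eval_real fun x => ?_
    have := eval_L ε f ![(-(x 0) / (2 * k) : ℂ), 2 * (x 1 + x 0 / (2 * k)) / ε]
    rw [hf, map_zero] at this
    rw [this]
    congr 2
    have hk' : (k : ℂ) ≠ 0 := by exact_mod_cast hk
    have hε' : (ε : ℂ) ≠ 0 := by exact_mod_cast hε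
    ext i
    fin_cases i
    · simp; field_simp
    · simp; field_simp; ring
  have hprod : MvPolynomial.bind₁ (L (1 : ℝ)) (MvPolynomial.homogeneousComponent d q) *
      MvPolynomial.bind₁ (L (-1 : ℝ)) (MvPolynomial.homogeneousComponent d p) = 0 := by
    refine MvPolynomial.eq_zero_of_eval_real fun x => ?_
    rw [map_mul, eval_L, eval_L, ← eval_homogeneousComponent_mul_eq_zero hA hd hp hq h (x 0) (x 1)]
    push_cast
    ring_nf
  exact (mul_eq_zero.1 hprod).imp (inj 1 one_ne_zero _) (inj (-1) (by norm_num) _)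

lemma integral_shear_fin_two (c e : ℝ) {f : (Fin 2 → ℝ) → ℂ} (hf : Continuous f) :
    ∫ x, f x = ∫ z : ℝ × ℝ, f ![z.2 + c * z.1, z.1 + e] := by
  have hshear : MeasurePreserving (fun z : ℝ × ℝ => (z.1 + e, z.2 + c * z.1)) :=
    (measurePreserving_add_right volume e).skew_product
      (g := fun w u => u + c * w) (by fun_prop)
      (ae_of_all _ fun w => (measurePreserving_add_right volume (c * w)).map_eq)
  have hmp : MeasurePreserving (fun z : ℝ × ℝ => ![z.2 + c * z.1, z.1 + e]) :=
    ((volume_preserving_finTwoArrow ℝ).symm.comp Measure.measurePreserving_swap).comp hshear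
  rw [← hmp.map_eq, integral_map hmp.measurable.aemeasurable hf.aestronglyMeasurable]

/-- Two-oscillator version of Knight's theorem: if the two oscillators are coupled
(`Ω₁₂ ≠ 0`), and a finite-quanta state `ψ = P·ψ₀` (a polynomial times the Gaussian
ground state `ψ₀(x) = exp(−x·Ωx/2)`) has the same expectation as `ψ₀` on every
Weyl operator supported on the second oscillator, then `P` is constant, i.e. `ψ`
is a multiple of the vacuum. -/
theorem two_oscillators_no_local_finite_quanta_state
    (Ω : Matrix (Fin 2) (Fin 2) ℝ) (hΩsymm : Ω.IsSymm) (hΩpos : Ω.PosDef)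
    (hcoupled : Ω 0 1 ≠ 0)
    (ψ₀ : (Fin 2 → ℝ) → ℝ)
    (hψ₀ : ∀ x, ψ₀ x = Real.exp (-(x ⬝ᵥ (Ω *ᵥ x)) / 2))
    (P : MvPolynomial (Fin 2) ℂ)
    (ψ : (Fin 2 → ℝ) → ℂ)
    (hψ : ∀ x, ψ x = MvPolynomial.eval (fun i => (x i : ℂ)) P * (ψ₀ x : ℂ))
    (hlocal : ∀ a b : ℝ,
      (∫ x : Fin 2 → ℝ,
          (starRingEnd ℂ) (ψ x)
            * Complex.exp (Complex.I * ((b * x 1 - a * b / 2 : ℝ) : ℂ))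
            * ψ (x - a • (Pi.single 1 1 : Fin 2 → ℝ)))
        = ∫ x : Fin 2 → ℝ,
            (ψ₀ x : ℂ)
              * Complex.exp (Complex.I * ((b * x 1 - a * b / 2 : ℝ) : ℂ))
              * (ψ₀ (x - a • (Pi.single 1 1 : Fin 2 → ℝ)) : ℂ)) :
    ∃ c : ℂ, P = MvPolynomial.C c := by
  have hA : 0 < Ω 0 0 := hΩpos.diag_pos
  have hdet : 0 < Ω 0 0 * Ω 1 1 - Ω 0 1 * Ω 0 1 := by
    have := hΩpos.det_pos
    rwa [Matrix.det_fin_two, hΩsymm.apply 0 1] at this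
  set k : ℝ := Ω 0 1 / (2 * Ω 0 0) with hk
  set δ : ℝ := (Ω 0 0 * Ω 1 1 - Ω 0 1 * Ω 0 1) / Ω 0 0 with hδdef
  have hk0 : k ≠ 0 := by positivity
  have hδ : 0 < δ := by positivity
  have hψ₀c : Continuous ψ₀ := by
    rw [funext hψ₀]
    simp only [dotProduct, mulVec, Fin.sum_univ_two]
    fun_prop
  have hψc : Continuous ψ := by
    rw [funext hψ]
    refine Continuous.mul ?_ (by fun_prop)
    exact (MvPolynomial.continuous_eval P).comp (by fun_prop)
  have hgauss (a w u : ℝ) :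
      ψ₀ ![u + -2 * k * w, w + a / 2] *
        ψ₀ (![u + -2 * k * w, w + a / 2] - a • (Pi.single 1 1 : Fin 2 → ℝ)) =
      Real.exp (-Ω 0 0 * u ^ 2) * Real.exp (-δ * w ^ 2) * Real.exp (-Ω 1 1 * a ^ 2 / 4) := by
    simp only [hψ₀, ← Real.exp_add]
    congr 1
    simp [dotProduct, mulVec, Fin.sum_univ_two, hΩsymm.apply 0 1, hk, hδdef]
    field_simp
    ring
  let Q : MvPolynomial (Fin 2) ℂ := P.map (starRingEnd ℂ)
  have hconj (x : Fin 2 → ℝ) : starRingEnd ℂ (MvPolynomial.eval (fun i => (x i : ℂ)) P) =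
      MvPolynomial.eval (fun i => (x i : ℂ)) Q := by
    rw [MvPolynomial.eval_map, ← MvPolynomial.coe_eval₂Hom, MvPolynomial.eval,
      MvPolynomial.coe_eval₂Hom, MvPolynomial.eval₂_comp_left]
    simp [Function.comp_def]
  have havg (a : ℝ) : gaussianAverage (Ω 0 0)
      (shearSubst (-2 * k) 1 (a / 2) Q * shearSubst (-2 * k) 1 (-a / 2) P - 1) = 0 := by
    have hshift (w u : ℝ) : ![u + -2 * k * w, w + a / 2] - a • (Pi.single 1 1 : Fin 2 → ℝ) =
        ![u + -2 * k * w, w + -a / 2] := by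
      ext i
      fin_cases i
      · simp
      · simp
        ring
    have hsubst (f : MvPolynomial (Fin 2) ℂ) (r w u : ℝ) :
        MvPolynomial.eval (fun i => ((![u + -2 * k * w, w + r] i : ℝ) : ℂ)) f =
          (shearSubst (-2 * k) 1 r f).evalEval (u : ℂ) (w : ℂ) := by
      rw [evalEval_shearSubst]
      congr 2
      ext i
      fin_cases i <;> simp
    set R := shearSubst (-2 * k) 1 (a / 2) Q * shearSubst (-2 * k) 1 (-a / 2) P with hR
    refine eq_zero_of_fourier_mul_gaussian_eq_zero hδ _ fun b => ?_
    let F (S : ℂ[X][X]) (z : ℝ × ℝ) : ℂ := Complex.exp (Complex.I * ((b * z.1 : ℝ) : ℂ)) *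
      (S.evalEval (z.2 : ℂ) (z.1 : ℂ) * (Real.exp (-Ω 0 0 * z.2 ^ 2) : ℂ) *
        (Real.exp (-δ * z.1 ^ 2) : ℂ))
    have hF (S : ℂ[X][X]) : Integrable (F S) := by
      refine (integrable_evalEval_mul_gaussian hA hδ S).bdd_mul (c := 1) ?_ ?_
      · exact Continuous.aestronglyMeasurable (by fun_prop)
      · refine ae_of_all _ fun z => ?_
        rw [mul_comm, Complex.norm_exp_ofReal_mul_I]
    set K : ℂ := (Real.exp (-Ω 1 1 * a ^ 2 / 4) : ℂ) with hK
    have hK0 : K ≠ 0 := by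
      rw [hK]
      exact_mod_cast (Real.exp_pos _).ne'
    have hphase (w : ℝ) : b * (w + a / 2) - a * b / 2 = b * w := by ring
    have hRF : ∫ z, F R z = ∫ z, F 1 z := by
      have h := hlocal a b
      rw [integral_shear_fin_two (-2 * k) (a / 2) (by fun_prop),
        integral_shear_fin_two (-2 * k) (a / 2) (by fun_prop)] at h
      refine mul_right_cancel₀ hK0 ?_
      rw [← integral_mul_const, ← integral_mul_const]
      refine Eq.trans (integral_congr_ae (ae_of_all _ fun z => ?_))
        (h.trans (integral_congr_ae (ae_of_all _ fun z => ?_)))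
      · have hg := congrArg ((↑) : ℝ → ℂ) (hgauss a z.1 z.2)
        rw [hshift] at hg
        have h1 := hsubst Q (a / 2) z.1 z.2
        have h2 := hsubst P (-a / 2) z.1 z.2
        push_cast at hg h1 h2
        simp only [F, hR, hshift, hψ, map_mul, hconj, Complex.conj_ofReal, evalEval_mul,
          Matrix.cons_val_one, Matrix.cons_val_fin_one, hphase, hK]
        push_cast
        rw [h1, h2]
        linear_combination (-Complex.exp (Complex.I * (b * z.1)) *
          (shearSubst (-2 * k) 1 (a / 2) Q).evalEval (z.2 : ℂ) (z.1 : ℂ) *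
          (shearSubst (-2 * k) 1 (-a / 2) P).evalEval (z.2 : ℂ) (z.1 : ℂ)) * hg
      · have hg := congrArg ((↑) : ℝ → ℂ) (hgauss a z.1 z.2)
        push_cast at hg
        simp only [F, evalEval_one, Matrix.cons_val_one, Matrix.cons_val_fin_one, hphase, hK]
        push_cast
        linear_combination Complex.exp (Complex.I * (b * z.1)) * hg
    calc
      _ = ∫ w : ℝ, ∫ u : ℝ, F (R - 1) (w, u) := by
        refine integral_congr_ae (ae_of_all _ fun w => ?_)
        simp only [F]
        rw [integral_const_mul, integral_mul_const, eval_gaussianAverage hA]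
      _ = ∫ z, F (R - 1) z := (integral_prod _ (hF (R - 1))).symm
      _ = ∫ z, (F R z - F 1 z) := by
        refine integral_congr_ae (ae_of_all _ fun z => ?_)
        simp only [F, evalEval_sub]
        ring
      _ = 0 := by rw [integral_sub (hF R) (hF 1), hRF, sub_self]
  by_contra! hP
  have hd : 0 < P.totalDegree := by
    rw [Nat.pos_iff_ne_zero]
    exact fun h0 => hP _ (MvPolynomial.totalDegree_eq_zero_iff_eq_C.1 h0)
  have hP0 : P ≠ 0 := by simpa using hP 0
  have hQ0 : Q ≠ 0 := by
    simpa [Q] using (MvPolynomial.map_injective _ (starRingEnd ℂ).injective).ne hP0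
  have hdeg : Q.totalDegree = P.totalDegree := by
    simp only [MvPolynomial.totalDegree, Q,
      MvPolynomial.support_map_of_injective _ (starRingEnd ℂ).injective]
  rcases homogeneousComponent_eq_zero_or_eq_zero hA hk0 hd le_rfl hdeg.le havg with h | h
  · rw [← hdeg] at h
    exact MvPolynomial.homogeneousComponent_totalDegree_ne_zero hQ0 h
  · exact MvPolynomial.homogeneousComponent_totalDegree_ne_zero hP0 h
end

section
/- Let d ≥ 1 be an integer and m > 0. Suppose h : ℝ^d → ℂ and g : ℝ^d → ℂ are Lebesgue-integrable functions each of which vanishes outside some compact subset of ℝ^d, and suppose that their Fourier transforms satisfy, for every k ∈ ℝ^d, 𝓕g(k) = √(‖k‖² + m²) · 𝓕h(k). Then h = 0 almost everywhere. (In other words, the operator with Fourier multiplier √(‖k‖² + m²) — the square root Ω of −Δ (up to normalization) plus m² — is strongly non-local: no nonzero h can have both h and Ωh compactly supported.) -/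
open MeasureTheory FourierTransform

open scoped Topology RealInnerProductSpace

/-- The Fourier–Laplace transform of a compactly supported integrable function, restricted to the
complexification of a line, is entire. -/
lemma differentiable_integral_exp_inner_mul {V : Type*} [NormedAddCommGroup V]
    [InnerProductSpace ℝ V] [MeasurableSpace V] [BorelSpace V] {μ : Measure V} {f : V → ℂ}
    (hf : Integrable f μ) {K : Set V} (hK : IsCompact K) (hfK : ∀ x ∉ K, f x = 0) (e : V) :
    Differentiable ℂ fun z : ℂ ↦
      ∫ x, Complex.exp (-(2 * Real.pi * ⟪x, e⟫ : ℝ) * Complex.I * z) * f x ∂μ := by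
  intro z₀
  set c : V → ℂ := fun x ↦ -(2 * Real.pi * ⟪x, e⟫ : ℝ) * Complex.I
  have hc_cont : Continuous c := by fun_prop
  obtain ⟨R, hR⟩ := hK.exists_bound_of_continuousOn hc_cont.continuousOn
  have hmeas (z : ℂ) : AEStronglyMeasurable (fun x ↦ Complex.exp (c x * z) * f x) μ :=
    (by fun_prop : Continuous fun x ↦ Complex.exp (c x * z)).measurable.aestronglyMeasurable.mul
      hf.aestronglyMeasurable
  have hexp (z : ℂ) (hz : z ∈ Metric.ball z₀ 1) (x : V) (hx : x ∈ K) :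
      ‖Complex.exp (c x * z)‖ ≤ Real.exp (R * (‖z₀‖ + 1)) := by
    refine (Complex.norm_exp_le_exp_norm _).trans (Real.exp_le_exp.2 ?_)
    have hz' : ‖z‖ ≤ ‖z₀‖ + 1 := by
      have h₁ : ‖z - z₀‖ < 1 := by simpa [dist_eq_norm] using hz
      have h₂ := norm_le_norm_add_norm_sub' z z₀
      linarith
    rw [norm_mul]
    exact mul_le_mul (hR x hx) hz' (norm_nonneg _) ((norm_nonneg _).trans (hR x hx))
  refine (hasDerivAt_integral_of_dominated_loc_of_deriv_le
    (F := fun z x ↦ Complex.exp (c x * z) * f x)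
    (F' := fun z x ↦ c x * (Complex.exp (c x * z) * f x))
    (bound := fun x ↦ R * (Real.exp (R * (‖z₀‖ + 1)) * ‖f x‖))
    (Metric.ball_mem_nhds z₀ one_pos) (.of_forall hmeas) ?_
    (hc_cont.measurable.aestronglyMeasurable.mul (hmeas z₀)) (.of_forall fun x z hz ↦ ?_)
    ((hf.norm.const_mul _).const_mul _) (.of_forall fun x z _ ↦ ?_)).2.differentiableAt
  · refine (hf.norm.const_mul (Real.exp (R * (‖z₀‖ + 1)))).mono' (hmeas z₀) (.of_forall fun x ↦ ?_)
    by_cases hx : x ∈ K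
    · rw [norm_mul]
      gcongr
      exact hexp z₀ (Metric.mem_ball_self one_pos) x hx
    · simp [hfK x hx]
  · by_cases hx : x ∈ K
    · rw [norm_mul (c x), norm_mul _ (f x)]
      have := (norm_nonneg _).trans (hR x hx)
      gcongr
      · exact hR x hx
      · exact hexp z hz x hx
    · simp [hfK x hx]
  · have hderiv : HasDerivAt (fun w ↦ Complex.exp (c x * w) * f x)
        (Complex.exp (c x * z) * (c x * 1) * f x) z :=
      ((hasDerivAt_id z).const_mul (c x)).cexp.mul_const (f x)
    exact hderiv.congr_deriv (by ring)

/-- The function `z ↦ √(z² + m²)` is not a quotient of entire functions, already as seen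
from the real line. -/
lemma eq_zero_of_eq_sqrt_mul {G H : ℂ → ℂ} (hG : Differentiable ℂ G) (hH : Differentiable ℂ H)
    {m : ℝ} (hm : 0 < m) (hGH : ∀ t : ℝ, G t = (Real.sqrt (t ^ 2 + m ^ 2) : ℂ) * H t) : H = 0 := by
  set z₀ : ℂ := m * Complex.I with hz₀
  have hana {f : ℂ → ℂ} (hf : Differentiable ℂ f) : AnalyticOnNhd ℂ f Set.univ :=
    fun z _ ↦ hf.analyticAt z
  have hPd : Differentiable ℂ fun z ↦ z + z₀ := by fun_prop
  have hQd : Differentiable ℂ fun z ↦ z - z₀ := by fun_prop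
  have hreal : Filter.Tendsto (fun t : ℝ ↦ (t : ℂ)) (𝓝[≠] 0) (𝓝[≠] 0) := by
    simpa using Complex.continuous_ofReal.continuousAt.continuousWithinAt.tendsto_nhdsWithin
      (x := (0 : ℝ)) (s := {0}ᶜ) (t := {0}ᶜ) (fun t ht ↦ by simpa using ht)
  have heq : G ^ 2 = ((fun z ↦ z + z₀) * fun z ↦ z - z₀) * H ^ 2 := by
    refine (hana (hG.pow 2)).eq_of_frequently_eq (hana ((hPd.mul hQd).mul (hH.pow 2))) (z₀ := 0)
      (hreal.frequently (Filter.Eventually.frequently (.of_forall fun t ↦ ?_)))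
    have hs : ((Real.sqrt (t ^ 2 + m ^ 2) : ℝ) : ℂ) ^ 2 = (t : ℂ) ^ 2 + (m : ℂ) ^ 2 := by
      exact_mod_cast Real.sq_sqrt (by positivity : 0 ≤ t ^ 2 + m ^ 2)
    simp only [Pi.mul_apply, Pi.pow_apply, hGH t, mul_pow, hs, hz₀]
    linear_combination ((m : ℂ) ^ 2 * H t ^ 2) * Complex.I_sq
  have hord := congrArg (analyticOrderAt · z₀) heq
  have hP : analyticOrderAt (fun z ↦ z + z₀) z₀ = 0 := by
    rw [analyticOrderAt_eq_zero]
    right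
    simp [hz₀, ← two_mul, hm.ne']
  have hQ : analyticOrderAt (fun z ↦ z - z₀) z₀ = 1 := analyticOrderAt_id_sub_const_self
  simp only [analyticOrderAt_mul ((hPd.analyticAt z₀).mul (hQd.analyticAt z₀))
    ((hH.pow 2).analyticAt z₀), analyticOrderAt_mul (hPd.analyticAt z₀) (hQd.analyticAt z₀),
    analyticOrderAt_pow (hG.analyticAt z₀), analyticOrderAt_pow (hH.analyticAt z₀), hP, hQ] at hord
  have htop : analyticOrderAt H z₀ = ⊤ := by
    by_contra hne
    obtain ⟨b, hb⟩ := ENat.ne_top_iff_exists.1 hne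
    rw [← hb] at hord
    cases hG' : analyticOrderAt G z₀ with
    | top =>
      rw [hG'] at hord
      exact absurd hord (by simp; exact_mod_cast ENat.top_ne_natCast (1 + 2 * b))
    | coe a =>
      rw [hG'] at hord
      simp only [nsmul_eq_mul, zero_add] at hord
      norm_cast at hord
      omega
  rw [analyticOrderAt_eq_top] at htop
  exact (hana hH).eq_of_eventuallyEq analyticOnNhd_const htop

/-- An integrable function whose Fourier transform vanishes is zero almost everywhere. -/
lemma ae_eq_zero_of_fourier_eq_zero {V : Type*} [NormedAddCommGroup V] [InnerProductSpace ℝ V]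
    [FiniteDimensional ℝ V] [MeasurableSpace V] [BorelSpace V] {f : V → ℂ}
    (hf : Integrable f volume) (hzero : ∀ k, 𝓕 f k = 0) : f =ᵐ[volume] 0 := by
  refine ae_eq_zero_of_integral_contDiff_smul_eq_zero hf.locallyIntegrable fun φ hφ hφc ↦ ?_
  have hφc' : HasCompactSupport (fun x ↦ (φ x : ℂ)) :=
    hφc.comp_left (g := ((↑) : ℝ → ℂ)) Complex.ofReal_zero
  set ψ : SchwartzMap V ℂ := hφc'.toSchwartzMap (Complex.ofRealCLM.contDiff.comp hφ)
  have hflip := VectorFourier.integral_fourierIntegral_smul_eq_flip (μ := volume) (ν := volume)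
    (L := innerₗ V) Real.continuous_fourierChar continuous_inner hf (𝓕⁻ ψ).integrable
  have hinv (x : V) : VectorFourier.fourierIntegral Real.fourierChar volume (innerₗ V).flip
      (𝓕⁻ ψ : SchwartzMap V ℂ) x = (φ x : ℂ) := by
    rw [flip_innerₗ]
    change 𝓕 ((𝓕⁻ ψ : SchwartzMap V ℂ) : V → ℂ) x = φ x
    rw [← SchwartzMap.fourier_coe, FourierTransform.fourier_fourierInv_eq]
    rfl
  have hzero' (k : V) : VectorFourier.fourierIntegral Real.fourierChar volume (innerₗ V) f k = 0 :=
    hzero k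
  simp only [hinv, hzero', zero_smul, integral_zero] at hflip
  rw [hflip]
  congr with x
  simp [mul_comm]

/-- Strong non-locality of `Ω = √(−Δ + m²)` (Paley–Wiener): if `h` and `g` are
integrable functions on `ℝ^d`, each vanishing outside a compact set, and their
Fourier transforms satisfy `𝓕g(k) = √(‖k‖² + m²) 𝓕h(k)` for every `k`, then
`h = 0` almost everywhere. -/
theorem sqrt_laplacian_strongly_nonlocal
    (d : ℕ) (hd : 1 ≤ d) (m : ℝ) (hm : 0 < m)
    (h g : EuclideanSpace ℝ (Fin d) → ℂ)
    (hh : Integrable h volume) (hg : Integrable g volume)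
    (hhc : ∃ K : Set (EuclideanSpace ℝ (Fin d)), IsCompact K ∧ ∀ x ∉ K, h x = 0)
    (hgc : ∃ K : Set (EuclideanSpace ℝ (Fin d)), IsCompact K ∧ ∀ x ∉ K, g x = 0)
    (hfourier : ∀ k : EuclideanSpace ℝ (Fin d),
      𝓕 g k = (Real.sqrt (‖k‖^2 + m^2) : ℂ) * 𝓕 h k) :
    h =ᵐ[volume] 0 := by
  obtain ⟨K, hK, hhK⟩ := hhc
  obtain ⟨L, hL, hgL⟩ := hgc
  have : Nonempty (Fin d) := ⟨⟨0, hd⟩⟩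
  refine ae_eq_zero_of_fourier_eq_zero hh fun k ↦ ?_
  obtain ⟨e, he, t, rfl⟩ : ∃ e : EuclideanSpace ℝ (Fin d), ‖e‖ = 1 ∧ ∃ t : ℝ, t • e = k := by
    by_cases hk : k = 0
    · obtain ⟨e, he⟩ := exists_norm_eq (EuclideanSpace ℝ (Fin d)) zero_le_one
      exact ⟨e, he, 0, by simp [hk]⟩
    · exact ⟨‖k‖⁻¹ • k, norm_smul_inv_norm hk, ‖k‖, by simp [smul_smul, hk]⟩
  have hline (f : EuclideanSpace ℝ (Fin d) → ℂ) (s : ℝ) : 𝓕 f (s • e) =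
      ∫ x, Complex.exp (-(2 * Real.pi * ⟪x, e⟫ : ℝ) * Complex.I * s) * f x := by
    rw [Real.fourier_eq']
    congr with x
    rw [inner_smul_right, smul_eq_mul]
    congr 2
    push_cast
    ring
  have hzero := eq_zero_of_eq_sqrt_mul
    (differentiable_integral_exp_inner_mul hg hL hgL e)
    (differentiable_integral_exp_inner_mul hh hK hhK e) hm fun s ↦ by
      rw [← hline, ← hline, hfourier, norm_smul, he, mul_one, Real.norm_eq_abs, sq_abs]
  rw [hline]
  exact congrFun hzero t
end
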